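/- arXiv:1610.02781 — 2 statements merged into one kernel-verified Lean document; each statement's English description precedes it below -/
import Mathlib

section
/- Suppose p, q ∈ (0,1), μ₀, μ₁ ∈ (0,1) with μ₀ ≠ μ₁, and ρ = 1−p−q ≠ 0. Set a' = (1−q)μ₁ − pμ₀, b' = pμ₀, c' = μ₁ − μ₀, d' = μ₀. Then the fixed-point equation τ_s(ω) = ω has two distinct real solutions (equivalently, (a'−d')² + 4b'c' > 0 and c' ≠ 0), and the solution ω* = (a' − d' + √((a'−d')² + 4b'c'))/(2c') satisfies ω* ∈ (0,1). -/
/-- Belief update after an observed service success: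
`τ_s(ω) = ((1−q)μ₁ω + pμ₀(1−ω)) / r(ω)` with `r(ω) = (1−ω)μ₀ + ωμ₁`. -/
noncomputable def tauS (p q mu0 mu1 ω : ℝ) : ℝ :=
  ((1 - q) * mu1 * ω + p * mu0 * (1 - ω)) / ((1 - ω) * mu0 + ω * mu1)

/-! The fixed points of `ω ↦ (aω + b) / (cω + d)` are the roots of `f ω = c ω² + (d - a) ω - b`.
For `tauS` one has `f 0 = -p μ₀ < 0 < q μ₁ = f 1`. This sign change makes the discriminant positive,
and it locates in `(0, 1)` the root at which `f` is increasing, the one with `+√`, whatever the sign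
of `c`. The poles are harmless because the determinant `ad - bc = μ₀ μ₁ (1 - p - q)` is nonzero. -/

theorem discrim_pos_of_mul_neg {R : Type*} [CommRing R] [LinearOrder R] [IsStrictOrderedRing R]
    {a b c x y : R} (h : (a * (x * x) + b * x + c) * (a * (y * y) + b * y + c) < 0) :
    0 < discrim a b c := by
  -- Substituting `x S + y T` and `S + T` for the variables of the binary form
  -- `a X² + b X Y + c Y²` multiplies its discriminant by `(x - y)²`.
  have discrim_mul_sq : discrim a b c * (x - y) ^ 2 =
      (2 * a * x * y + b * (x + y) + 2 * c) ^ 2 -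
        4 * ((a * (x * x) + b * x + c) * (a * (y * y) + b * y + c)) := by
    rw [discrim]
    ring
  have discrim_mul_sq_pos : 0 < discrim a b c * (x - y) ^ 2 := by
    rw [discrim_mul_sq]
    linarith [sq_nonneg (2 * a * x * y + b * (x + y) + 2 * c)]
  exact pos_of_mul_pos_left discrim_mul_sq_pos (sq_nonneg _)

section Field

variable {K : Type*} [Field K]

theorem quadratic_eq_mul_of_discrim_eq_mul_self [NeZero (2 : K)] {a b c s : K} (ha : a ≠ 0)
    (hs : discrim a b c = s * s) (x : K) :
    a * (x * x) + b * x + c =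
      (x - (-b + s) / (2 * a)) * (a * (x - (-b + s) / (2 * a)) + s) := by
  rw [discrim] at hs
  field_simp
  linear_combination -hs

theorem quadratic_root_mem_Ioo [LinearOrder K] [IsStrictOrderedRing K] {a b c s l u : K}
    (ha : a ≠ 0) (hs : discrim a b c = s * s) (hs₀ : 0 ≤ s) (hlu : l < u)
    (hl : a * (l * l) + b * l + c < 0) (hu : 0 < a * (u * u) + b * u + c) :
    (-b + s) / (2 * a) ∈ Set.Ioo l u := by
  rw [quadratic_eq_mul_of_discrim_eq_mul_self ha hs] at hl hu
  set r := (-b + s) / (2 * a)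
  constructor
  · by_contra! hrl
    have factor_l : a * (l - r) + s < 0 := neg_of_mul_neg_right hl (sub_nonneg.2 hrl)
    have factor_u : 0 < a * (u - r) + s := pos_of_mul_pos_right hu (by linarith)
    have a_neg : a < 0 := neg_of_mul_neg_left (by linarith) (sub_nonneg.2 hrl)
    linarith [mul_lt_mul_of_neg_left hlu a_neg]
  · by_contra! hur
    have factor_u : a * (u - r) + s < 0 := neg_of_mul_pos_right hu (sub_nonpos.2 hur)
    have factor_l : 0 < a * (l - r) + s := pos_of_mul_neg_right hl (by linarith)
    have a_pos : 0 < a := pos_of_mul_neg_left (by linarith) (sub_nonpos.2 hur)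
    linarith [mul_lt_mul_of_pos_left hlu a_pos]

theorem mobius_eq_self_of_quadratic_eq_zero {a b c d x : K} (hdet : a * d - b * c ≠ 0)
    (hx : c * (x * x) + (d - a) * x + -b = 0) : (a * x + b) / (c * x + d) = x := by
  have num_eq : a * x + b = x * (c * x + d) := by linear_combination -hx
  have denom_ne_zero : c * x + d ≠ 0 := by
    intro hpole
    rw [hpole, mul_zero] at num_eq
    exact hdet (by linear_combination a * hpole - c * num_eq)
  rw [num_eq, mul_div_cancel_right₀ x denom_ne_zero]

end Field

theorem tauS_eq_mobius (p q mu0 mu1 ω : ℝ) :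
    tauS p q mu0 mu1 ω =
      (((1 - q) * mu1 - p * mu0) * ω + p * mu0) / ((mu1 - mu0) * ω + mu0) := by
  rw [tauS]
  ring_nf

theorem tauS_eq_self_of_quadratic_eq_zero {p q mu0 mu1 ω : ℝ} (h0 : mu0 ≠ 0) (h1 : mu1 ≠ 0)
    (hrho : 1 - p - q ≠ 0)
    (hω : (mu1 - mu0) * (ω * ω) + (mu0 - ((1 - q) * mu1 - p * mu0)) * ω + -(p * mu0) = 0) :
    tauS p q mu0 mu1 ω = ω := by
  rw [tauS_eq_mobius]
  refine mobius_eq_self_of_quadratic_eq_zero ?_ hω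
  have det_eq : ((1 - q) * mu1 - p * mu0) * mu0 - p * mu0 * (mu1 - mu0) =
      mu0 * mu1 * (1 - p - q) := by ring
  rw [det_eq]
  exact mul_ne_zero (mul_ne_zero h0 h1) hrho

theorem tauS_fixed_points_general
    (p q mu0 mu1 : ℝ)
    (hpmu : 0 < p * mu0) (hqmu : 0 < q * mu1)
    (hmu : mu0 ≠ mu1) (hrho : 1 - p - q ≠ 0)
    (a' b' c' d' : ℝ)
    (ha : a' = (1 - q) * mu1 - p * mu0)
    (hb : b' = p * mu0)
    (hc : c' = mu1 - mu0)
    (hd : d' = mu0) :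
    c' ≠ 0 ∧ 0 < (a' - d') ^ 2 + 4 * b' * c' ∧
    (∃ ω₁ ω₂ : ℝ, ω₁ ≠ ω₂ ∧ tauS p q mu0 mu1 ω₁ = ω₁ ∧ tauS p q mu0 mu1 ω₂ = ω₂) ∧
    tauS p q mu0 mu1 ((a' - d' + Real.sqrt ((a' - d') ^ 2 + 4 * b' * c')) / (2 * c'))
      = (a' - d' + Real.sqrt ((a' - d') ^ 2 + 4 * b' * c')) / (2 * c') ∧
    (a' - d' + Real.sqrt ((a' - d') ^ 2 + 4 * b' * c')) / (2 * c') ∈ Set.Ioo (0 : ℝ) 1 := by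
  have hc₀ : c' ≠ 0 := hc ▸ sub_ne_zero.2 hmu.symm
  have neg_at_zero : c' * (0 * 0) + (d' - a') * 0 + -b' < 0 := by linarith
  have pos_at_one : 0 < c' * (1 * 1) + (d' - a') * 1 + -b' := by linarith
  have discrim_eq : discrim c' (d' - a') (-b') = (a' - d') ^ 2 + 4 * b' * c' := by
    rw [discrim]
    ring
  have hD : 0 < (a' - d') ^ 2 + 4 * b' * c' :=
    discrim_eq ▸ discrim_pos_of_mul_neg (mul_neg_of_neg_of_pos neg_at_zero pos_at_one)
  have sqrt_pos := Real.sqrt_pos.2 hD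
  have hs := discrim_eq.trans (Real.mul_self_sqrt hD.le).symm
  set s := √((a' - d') ^ 2 + 4 * b' * c')
  have root_mem := quadratic_root_mem_Ioo hc₀ hs sqrt_pos.le one_pos neg_at_zero pos_at_one
  have root_iff := quadratic_eq_zero_iff hc₀ hs
  rw [neg_sub] at root_mem root_iff
  have fixed (ω : ℝ) (hω : ω = (a' - d' + s) / (2 * c') ∨ ω = (a' - d' - s) / (2 * c')) :
      tauS p q mu0 mu1 ω = ω := by
    apply tauS_eq_self_of_quadratic_eq_zero (right_ne_zero_of_mul hpmu.ne')
      (right_ne_zero_of_mul hqmu.ne') hrho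
    simpa only [ha, hb, hc, hd] using (root_iff ω).2 hω
  have roots_ne : (a' - d' + s) / (2 * c') ≠ (a' - d' - s) / (2 * c') := by
    rw [Ne, div_left_inj' (mul_ne_zero two_ne_zero hc₀)]
    linarith
  exact ⟨hc₀, hD, ⟨_, _, roots_ne, fixed _ (.inl rfl), fixed _ (.inr rfl)⟩, fixed _ (.inl rfl),
    root_mem⟩

/-- For `p, q ∈ (0,1)`, `μ₀ ≠ μ₁ ∈ (0,1)` and `ρ = 1−p−q ≠ 0`, the equation `τ_s(ω) = ω`
has two distinct real solutions (equivalently `(a'−d')² + 4b'c' > 0` and `c' ≠ 0`), and the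
solution `ω* = (a' − d' + √((a'−d')² + 4b'c'))/(2c')` lies in `(0,1)`. -/
theorem tauS_fixed_points
    (p q mu0 mu1 : ℝ)
    (hp : p ∈ Set.Ioo (0 : ℝ) 1) (hq : q ∈ Set.Ioo (0 : ℝ) 1)
    (hmu0 : mu0 ∈ Set.Ioo (0 : ℝ) 1) (hmu1 : mu1 ∈ Set.Ioo (0 : ℝ) 1)
    (hmu : mu0 ≠ mu1) (hrho : 1 - p - q ≠ 0)
    (a' b' c' d' : ℝ)
    (ha : a' = (1 - q) * mu1 - p * mu0)
    (hb : b' = p * mu0)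
    (hc : c' = mu1 - mu0)
    (hd : d' = mu0) :
    c' ≠ 0 ∧ 0 < (a' - d') ^ 2 + 4 * b' * c' ∧
    (∃ ω₁ ω₂ : ℝ, ω₁ ≠ ω₂ ∧ tauS p q mu0 mu1 ω₁ = ω₁ ∧ tauS p q mu0 mu1 ω₂ = ω₂) ∧
    tauS p q mu0 mu1 ((a' - d' + Real.sqrt ((a' - d') ^ 2 + 4 * b' * c')) / (2 * c'))
      = (a' - d' + Real.sqrt ((a' - d') ^ 2 + 4 * b' * c')) / (2 * c') ∧
    (a' - d' + Real.sqrt ((a' - d') ^ 2 + 4 * b' * c')) / (2 * c') ∈ Set.Ioo (0 : ℝ) 1 :=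
  tauS_fixed_points_general p q mu0 mu1 (mul_pos hp.1 hmu0.1) (mul_pos hq.1 hmu1.1) hmu hrho
    a' b' c' d' ha hb hc hd
end

section
/- Suppose p, q ∈ (0,1), μ₀, μ₁ ∈ (0,1) with μ₀ ≠ μ₁, and ρ = 1−p−q ≠ 0. With a = (1−q)(1−μ₁) − p(1−μ₀), b = p(1−μ₀), c = (1−μ₁) − (1−μ₀), d = 1−μ₀, and ω* = (a − d + √((a−d)² + 4bc))/(2c), the fixed point ω* of τ_f is stable: the derivative of τ_f at ω* has absolute value strictly less than 1. -/
/-- Belief update after an observed service failure: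
`τ_f(ω) = ((1−q)(1−μ₁)ω + p(1−μ₀)(1−ω)) / (1 − r(ω))` with `r(ω) = (1−ω)μ₀ + ωμ₁`. -/
noncomputable def tauF (p q mu0 mu1 ω : ℝ) : ℝ :=
  ((1 - q) * (1 - mu1) * ω + p * (1 - mu0) * (1 - ω)) / (1 - ((1 - ω) * mu0 + ω * mu1))

/-!
A fixed point `z` of the Möbius map of a matrix `M = [[a, b], [c, d]]` corresponds to the
eigenvector `(z, 1)` of `M`, with eigenvalue `c z + d`. The other eigenvalue is `a - c z`, so the
derivative `det M / (c z + d)²` at `z` is the ratio `(a - c z) / (c z + d)` of the eigenvalues.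
At the root `ω*` the eigenvalues are `(a + d ± s) / 2`, where `s` is the square root of the
discriminant, with the `+` sign in the denominator; the ratio has absolute value less than `1`
because both the trace `a + d` and `s` are positive.
-/

open Function

/-- The Möbius transformation `z ↦ (a z + b) / (c z + d)` on the affine line. At the pole
`c z + d = 0` it takes the junk value `0`. -/
def mobius {K : Type*} [Field K] (a b c d z : K) : K :=
  (a * z + b) / (c * z + d)

section Field

variable {K : Type*} [Field K] {a b c d s z : K}

lemma isFixedPt_mobius_iff (hz : c * z + d ≠ 0) :
    IsFixedPt (mobius a b c d) z ↔ c * (z * z) + (d - a) * z + -b = 0 := by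
  rw [IsFixedPt, mobius, div_eq_iff hz, eq_comm, ← sub_eq_zero]
  ring_nf

lemma mobius_det_eq_mul_of_isFixedPt (hz : c * z + d ≠ 0) (hfix : IsFixedPt (mobius a b c d) z) :
    a * d - b * c = (a - c * z) * (c * z + d) := by
  linear_combination c * (isFixedPt_mobius_iff hz).1 hfix

lemma mobius_denom_quadratic_root [NeZero (2 : K)] (hc : c ≠ 0) :
    c * ((a - d + s) / (2 * c)) + d = (a + d + s) / 2 := by
  have h2 : (2 : K) ≠ 0 := two_ne_zero
  field_simp
  ring

lemma isFixedPt_mobius_quadratic_root [NeZero (2 : K)] (hc : c ≠ 0)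
    (hs : s ^ 2 = (a - d) ^ 2 + 4 * b * c) (hne : a + d + s ≠ 0) :
    IsFixedPt (mobius a b c d) ((a - d + s) / (2 * c)) := by
  have hdenom : c * ((a - d + s) / (2 * c)) + d ≠ 0 := by
    rw [mobius_denom_quadratic_root hc]
    exact div_ne_zero hne two_ne_zero
  have hdiscrim : discrim c (d - a) (-b) = s * s := by
    rw [discrim]
    linear_combination -hs
  rw [isFixedPt_mobius_iff hdenom, quadratic_eq_zero_iff hc hdiscrim, neg_sub]
  exact Or.inl rfl

end Field

section Deriv

variable {𝕜 : Type*} [NontriviallyNormedField 𝕜] {a b c d z : 𝕜}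

lemma hasDerivAt_mobius (hz : c * z + d ≠ 0) :
    HasDerivAt (mobius a b c d) ((a * d - b * c) / (c * z + d) ^ 2) z := by
  have hasDerivAt_affine (u v : 𝕜) : HasDerivAt (fun w ↦ u * w + v) u z := by
    simpa only [mul_one] using ((hasDerivAt_id' z).const_mul u).add_const v
  refine ((hasDerivAt_affine a b).div (hasDerivAt_affine c d) hz).congr_deriv ?_
  ring

lemma deriv_mobius_of_isFixedPt (hz : c * z + d ≠ 0) (hfix : IsFixedPt (mobius a b c d) z) :
    deriv (mobius a b c d) z = (a - c * z) / (c * z + d) := by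
  rw [(hasDerivAt_mobius hz).deriv, mobius_det_eq_mul_of_isFixedPt hz hfix, sq,
    mul_div_mul_right _ _ hz]

lemma deriv_mobius_quadratic_root [NeZero (2 : 𝕜)] {s : 𝕜} (hc : c ≠ 0)
    (hs : s ^ 2 = (a - d) ^ 2 + 4 * b * c) (hne : a + d + s ≠ 0) :
    deriv (mobius a b c d) ((a - d + s) / (2 * c)) = (a + d - s) / (a + d + s) := by
  have h2 : (2 : 𝕜) ≠ 0 := two_ne_zero
  have hdenom := mobius_denom_quadratic_root (a := a) (d := d) (s := s) hc
  have hother : a - c * ((a - d + s) / (2 * c)) = (a + d - s) / 2 := by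
    field_simp
    ring
  rw [deriv_mobius_of_isFixedPt (hdenom ▸ div_ne_zero hne h2)
    (isFixedPt_mobius_quadratic_root hc hs hne), hdenom, hother, div_div_div_cancel_right₀ h2]

end Deriv

lemma abs_sub_div_add_lt_one {K : Type*} [Field K] [LinearOrder K] [IsStrictOrderedRing K]
    {x y : K} (hx : 0 < x) (hy : 0 < y) : |(x - y) / (x + y)| < 1 := by
  rw [abs_div, abs_of_pos (add_pos hx hy), div_lt_one (add_pos hx hy), abs_sub_lt_iff]
  constructor <;> linarith

theorem mobius_quadratic_root_stable {a b c d : ℝ} (hc : c ≠ 0) (htrace : 0 < a + d)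
    (hdiscrim : 0 < (a - d) ^ 2 + 4 * b * c) :
    IsFixedPt (mobius a b c d) ((a - d + √((a - d) ^ 2 + 4 * b * c)) / (2 * c)) ∧
      |deriv (mobius a b c d) ((a - d + √((a - d) ^ 2 + 4 * b * c)) / (2 * c))| < 1 := by
  have hsqrt : 0 < √((a - d) ^ 2 + 4 * b * c) := Real.sqrt_pos.2 hdiscrim
  have hsq := Real.sq_sqrt hdiscrim.le
  have hne := (add_pos htrace hsqrt).ne'
  refine ⟨isFixedPt_mobius_quadratic_root hc hsq hne, ?_⟩
  rw [deriv_mobius_quadratic_root hc hsq hne]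
  exact abs_sub_div_add_lt_one htrace hsqrt

lemma tauF_eq_mobius (p q mu0 mu1 : ℝ) :
    tauF p q mu0 mu1 = mobius ((1 - q) * (1 - mu1) - p * (1 - mu0)) (p * (1 - mu0))
      ((1 - mu1) - (1 - mu0)) (1 - mu0) := by
  funext ω
  rw [tauF, mobius]
  congr 1 <;> ring

theorem tauF_fixed_point_stable_general
    (p q mu0 mu1 : ℝ)
    (hp : p ∈ Set.Ioc (0 : ℝ) 1) (hq : q ∈ Set.Ioc (0 : ℝ) 1) (hpq : p + q < 2)
    (hmu0 : mu0 < 1) (hmu1 : mu1 < 1) (hmu : mu0 ≠ mu1)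
    (a b c d ωs : ℝ)
    (ha : a = (1 - q) * (1 - mu1) - p * (1 - mu0))
    (hb : b = p * (1 - mu0))
    (hc : c = (1 - mu1) - (1 - mu0))
    (hd : d = 1 - mu0)
    (hωs : ωs = (a - d + √((a - d) ^ 2 + 4 * b * c)) / (2 * c)) :
    IsFixedPt (tauF p q mu0 mu1) ωs ∧ |deriv (tauF p q mu0 mu1) ωs| < 1 := by
  have hx : 0 < 1 - mu0 := sub_pos.2 hmu0
  have hy : 0 < 1 - mu1 := sub_pos.2 hmu1
  have hc_ne : c ≠ 0 := fun h ↦ hmu (by linarith)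
  have htrace : 0 < a + d := by
    have h : a + d = (1 - q) * (1 - mu1) + (1 - p) * (1 - mu0) := by rw [ha, hd]; ring
    rw [h]
    rcases hp.2.lt_or_eq with hp1 | rfl
    · exact add_pos_of_nonneg_of_pos (mul_nonneg (sub_nonneg.2 hq.2) hy.le)
        (mul_pos (sub_pos.2 hp1) hx)
    · have hq1 : 0 < 1 - q := by linarith
      simpa only [sub_self, zero_mul, add_zero] using mul_pos hq1 hy
  have hdiscrim : 0 < (a - d) ^ 2 + 4 * b * c := by
    have h : (a - d) ^ 2 + 4 * b * c = ((1 - q) * (1 - mu1) - (1 - p) * (1 - mu0)) ^ 2 +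
        4 * ((p * q) * ((1 - mu0) * (1 - mu1))) := by
      rw [ha, hb, hc, hd]; ring
    rw [h]
    exact add_pos_of_nonneg_of_pos (sq_nonneg _)
      (mul_pos four_pos (mul_pos (mul_pos hp.1 hq.1) (mul_pos hx hy)))
  rw [tauF_eq_mobius, ← ha, ← hb, ← hc, ← hd, hωs]
  exact mobius_quadratic_root_stable hc_ne htrace hdiscrim

/-- For `p, q ∈ (0,1)`, `μ₀ ≠ μ₁ ∈ (0,1)` and `ρ = 1−p−q ≠ 0`, the fixed point
`ω* = (a − d + √((a−d)² + 4bc))/(2c)` of `τ_f` is stable: the derivative of `τ_f`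
at `ω*` has absolute value strictly less than `1`. -/
theorem tauF_fixed_point_stable
    (p q mu0 mu1 : ℝ)
    (hp : p ∈ Set.Ioo (0 : ℝ) 1) (hq : q ∈ Set.Ioo (0 : ℝ) 1)
    (hmu0 : mu0 ∈ Set.Ioo (0 : ℝ) 1) (hmu1 : mu1 ∈ Set.Ioo (0 : ℝ) 1)
    (hmu : mu0 ≠ mu1) (hrho : 1 - p - q ≠ 0)
    (a b c d ωs : ℝ)
    (ha : a = (1 - q) * (1 - mu1) - p * (1 - mu0))
    (hb : b = p * (1 - mu0))
    (hc : c = (1 - mu1) - (1 - mu0))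
    (hd : d = 1 - mu0)
    (hωs : ωs = (a - d + Real.sqrt ((a - d) ^ 2 + 4 * b * c)) / (2 * c)) :
    |deriv (tauF p q mu0 mu1) ωs| < 1 :=
  (tauF_fixed_point_stable_general p q mu0 mu1 (Set.Ioo_subset_Ioc_self hp)
    (Set.Ioo_subset_Ioc_self hq) (by linarith [hp.2, hq.2]) hmu0.2 hmu1.2 hmu
    a b c d ωs ha hb hc hd hωs).2
end
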